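/- Let a = (a_1,...,a_l) be a sequence of positive integers and v^{◊a}_η a canonical basis element of V(a). If η_1 = 0 then F(v^{◊a}_η) = v^{◊a}_{η'}, where η' = (1, η_2, ..., η_l); if η_1 = 1 then F(v^{◊a}_η) = 0. -/

import Mathlib

open scoped Classical

set_option maxHeartbeats 1000000
set_option synthInstance.maxHeartbeats 200000

noncomputable section

abbrev K : Type := RatFunc ℂ

noncomputable def q : K := RatFunc.X

/-- The quantum integer `[k] = (q^k - q^{-k})/(q - q^{-1})`. -/
noncomputable def qnum (k : ℕ) : K := (q ^ k - q⁻¹ ^ k) / (q - q⁻¹)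

/-- The quantum factorial `[k]! = [k][k-1]⋯[1]`. -/
noncomputable def qfact : ℕ → K
  | 0 => 1
  | k + 1 => qnum (k + 1) * qfact k

/-- The underlying vector space of `V(a_1) ⊗ ⋯ ⊗ V(a_l)`, with standard basis indexed by
sequences `η ∈ {0,1}^l`. -/
abbrev V (n : ℕ) : Type := (Fin n → Fin 2) → K

/-- The standard basis vector `v^a_η`. -/
noncomputable def eb {n : ℕ} (η : Fin n → Fin 2) : V n := fun γ => if γ = η then 1 else 0

/-- The number of `1`s in `γ` strictly before position `i` (the Koszul sign exponent). -/
def onesBefore {n : ℕ} (γ : Fin n → Fin 2) (i : Fin n) : ℕ :=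
  (Finset.univ.filter (fun k => k < i ∧ γ k = 1)).card

/-- The action of `E` on `V(a_1) ⊗ ⋯ ⊗ V(a_l)` (via the iterated comultiplication
`Δ(E) = E ⊗ K⁻¹ + 1 ⊗ E`, with the Koszul sign rule). -/
noncomputable def Eop (a : ℕ → ℕ) (n : ℕ) : Module.End K (V n) where
  toFun f := fun γ => ∑ i : Fin n,
    if γ i = 0 then
      ((-1 : K) ^ onesBefore γ i) * qnum (a i)
        * q ^ (-((∑ j ∈ Finset.univ.filter (fun j => i < j), a j : ℕ) : ℤ))
        * f (Function.update γ i 1)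
    else 0
  map_add' f g := by
    funext γ
    simp only [Pi.add_apply, ← Finset.sum_add_distrib]
    refine Finset.sum_congr rfl fun i _ => ?_
    split_ifs <;> ring
  map_smul' c f := by
    funext γ
    simp only [Pi.smul_apply, smul_eq_mul, RingHom.id_apply, Finset.mul_sum]
    refine Finset.sum_congr rfl fun i _ => ?_
    split_ifs <;> ring

/-- The action of `F` on `V(a_1) ⊗ ⋯ ⊗ V(a_l)` (via the iterated comultiplication
`Δ(F) = F ⊗ 1 + K ⊗ F`, with the Koszul sign rule). -/
noncomputable def Fop (a : ℕ → ℕ) (n : ℕ) : Module.End K (V n) where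
  toFun f := fun γ => ∑ i : Fin n,
    if γ i = 1 then
      ((-1 : K) ^ onesBefore γ i)
        * q ^ (∑ j ∈ Finset.univ.filter (fun j => j < i), a j)
        * f (Function.update γ i 0)
    else 0
  map_add' f g := by
    funext γ
    simp only [Pi.add_apply, ← Finset.sum_add_distrib]
    refine Finset.sum_congr rfl fun i _ => ?_
    split_ifs <;> ring
  map_smul' c f := by
    funext γ
    simp only [Pi.smul_apply, smul_eq_mul, RingHom.id_apply, Finset.mul_sum]
    refine Finset.sum_congr rfl fun i _ => ?_
    split_ifs <;> ring

/-- The number of entries of `η` equal to `1` (the super degree of `v_η`). -/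
def ones {m : ℕ} (η : Fin m → Fin 2) : ℕ := (Finset.univ.filter (fun i => η i = 1)).card

/-- The number of entries of `η` equal to `0`. -/
def zeros {m : ℕ} (η : Fin m → Fin 2) : ℕ := (Finset.univ.filter (fun i => η i = 0)).card

/-- The parity twist `x ↦ (-1)^{|x|}·x` (on homogeneous components). -/
noncomputable def twist {m : ℕ} (x : V m) : V m := fun η => (-1 : K) ^ ones η * x η

/-- The bar involution of `V(a_1) ⊗ ⋯ ⊗ V(a_m)`, defined inductively from
`bar v^a_i = v^a_i` on each factor by `bar (w ⊗ w') = Θ'(bar w ⊗ bar w')` with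
`Θ' = 1 + (q⁻¹ - q) E ⊗ F` (with the Koszul sign rule) and `bar q = q⁻¹`. -/
noncomputable def barV (a : ℕ → ℕ) : (m : ℕ) → V m → V m
  | 0, f => f
  | m + 1, f => fun γ =>
    if γ (Fin.last m) = 0 then
      barV a m (fun δ => f (Fin.snoc δ 0)) (fun i => γ i.castSucc)
    else
      barV a m (fun δ => f (Fin.snoc δ 1)) (fun i => γ i.castSucc)
        + (q⁻¹ - q) *
          Eop a m (twist (barV a m (fun δ => f (Fin.snoc δ 0)))) (fun i => γ i.castSucc)

def s (n : ℕ) (i : Fin (n - 1)) : Equiv.Perm (Fin n) :=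
  Equiv.swap ⟨(i : ℕ), by have := i.isLt; omega⟩ ⟨(i : ℕ) + 1, by have := i.isLt; omega⟩

def wordProd (n : ℕ) (l : List (Fin (n - 1))) : Equiv.Perm (Fin n) :=
  (l.map (s n)).prod

def len (n : ℕ) (w : Equiv.Perm (Fin n)) : ℕ :=
  sInf {k | ∃ l : List (Fin (n - 1)), l.length = k ∧ wordProd n l = w}

def bruhatLE (n : ℕ) (u w : Equiv.Perm (Fin n)) : Prop :=
  ∃ l : List (Fin (n - 1)), l.length = len n w ∧ wordProd n l = w ∧
    ∃ t : List (Fin (n - 1)), t.Sublist l ∧ wordProd n t = u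

def bruhatLT (n : ℕ) (u w : Equiv.Perm (Fin n)) : Prop :=
  bruhatLE n u w ∧ u ≠ w

/-- The parabolic subgroup of `S_n` generated by the simple transpositions indexed by `P`. -/
def parab (n : ℕ) (P : Finset (Fin (n - 1))) : Subgroup (Equiv.Perm (Fin n)) :=
  Subgroup.closure {σ | ∃ i ∈ P, σ = s n i}

/-- `w` is a shortest coset representative for `(S_k × S_{l-k}) \ S_l` (the parabolic
subgroup generated by all simple reflections except `s_k`). -/
def shortRep (l k : ℕ) (w : Equiv.Perm (Fin l)) : Prop :=
  ∀ x ∈ parab l (Finset.univ.filter (fun i : Fin (l - 1) => (i : ℕ) + 1 ≠ k)),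
    len l w ≤ len l (x * w)

/-- The minimal `{0,1}`-sequence `η_min = (0,…,0,1,…,1)` with `k` zeros. -/
def etaMin (l k : ℕ) : Fin l → Fin 2 := fun i => if (i : ℕ) < k then 0 else 1

/-- The partial order on the standard basis vectors of a weight space: within the weight
with `k` zeros, `η < γ` iff `η = η_min·u`, `γ = η_min·w` for shortest coset
representatives `u ≺ w` in the Bruhat order. -/
def seqLT (l k : ℕ) (η γ : Fin l → Fin 2) : Prop :=
  ∃ u w : Equiv.Perm (Fin l), shortRep l k u ∧ shortRep l k w ∧ bruhatLT l u w ∧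
    η = (fun i => etaMin l k (u i)) ∧ γ = (fun i => etaMin l k (w i))

/-- The bar involution of `V(a)`: the semilinear extension (with respect to the field
homomorphism `barK`, which implements `q ↦ q⁻¹`) of the map `barV` computing the bar
involution on the standard basis vectors. -/
noncomputable def barSemi (barK : K →+* K) (a : ℕ → ℕ) (l : ℕ) (f : V l) : V l :=
  barV a l (fun η => barK (f η))

/-- `v` is the canonical basis element `v^{◊a}_η` of `V(a)`: it is bar-invariant and
`v - v^a_η` is a `q·ℤ[q]`-linear combination of standard basis vectors strictly smaller
than `v^a_η`. -/
def IsCanon (barK : K →+* K) (a : ℕ → ℕ) (l : ℕ) (η : Fin l → Fin 2) (v : V l) : Prop :=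
  barSemi barK a l v = v ∧
  ∃ R : (Fin l → Fin 2) → Polynomial ℤ,
    (∀ γ, ¬ seqLT l (zeros η) γ η → R γ = 0) ∧
    v = eb η + ∑ γ : Fin l → Fin 2, (q * Polynomial.aeval q (R γ)) • eb γ

/-!
`F` commutes with the bar involution: expanding the bar involution of the last tensor factor via
`Θ'`, this reduces to the relation `EF + FE = [k]`. Hence `F v^◊_η` is bar-invariant. In `F v_η`
the term that changes the entry at position `j` carries the coefficient `± q^{a_1 + ⋯ + a_{j-1}}`,
so modulo `q ℤ[q]` only the first position contributes, and `F` preserves the `q ℤ[q]`-span of the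
standard basis. Therefore `F v^◊_η` is congruent modulo that span to `v_{η'}` or to `0`. As the bar
involution is unitriangular and no nonzero element of `q ℤ[q]` is fixed by `q ↦ q⁻¹`, a
bar-invariant vector is determined by its residue class.
-/

section SumsOverFin

open Finset

theorem sum_filter_lt_eq_sum_range {M : Type*} [AddCommMonoid M] (f : ℕ → M) {n : ℕ} (i : Fin n) :
    ∑ j with j < i, f j = ∑ j ∈ range i, f j := by
  rw [← Nat.Iio_eq_range, ← Fin.map_valEmbedding_Iio, sum_map, filter_gt_eq_Iio]
  rfl

theorem sum_filter_gt_eq_sum_Ico {M : Type*} [AddCommMonoid M] (f : ℕ → M) {n : ℕ} (i : Fin n) :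
    ∑ j with i < j, f j = ∑ j ∈ Ico (i + 1 : ℕ) n, f j := by
  rw [filter_lt_eq_Ioi]
  exact (sum_map (Ioi i) Fin.valEmbedding f).symm.trans (by rw [Fin.map_valEmbedding_Ioi]; rfl)

end SumsOverFin

section QuantumIntegers

theorem transcendental_q : Transcendental ℤ q :=
  (RatFunc.transcendental_X (K := ℂ)).restrictScalars Int.cast_injective

theorem q_ne_zero : q ≠ 0 := RatFunc.X_ne_zero

theorem q_sub_inv_ne_zero : q - q⁻¹ ≠ 0 := by
  intro h
  have hroot : Polynomial.aeval q (Polynomial.X ^ 2 - 1 : Polynomial ℤ) = 0 := by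
    have hq : q * q⁻¹ = 1 := mul_inv_cancel₀ q_ne_zero
    simp only [map_sub, map_pow, Polynomial.aeval_X, map_one]
    linear_combination q * h + hq
  exact transcendental_q ⟨_, (Polynomial.monic_X_pow_sub_C 1 two_ne_zero).ne_zero, hroot⟩

theorem sub_inv_mul_qnum (k : ℕ) : (q - q⁻¹) * qnum k = q ^ k - q⁻¹ ^ k :=
  mul_div_cancel₀ _ q_sub_inv_ne_zero

theorem qnum_add (k n : ℕ) : qnum (k + n) = q ^ k * qnum n + q ^ (-(n : ℤ)) * qnum k := by
  apply mul_left_cancel₀ q_sub_inv_ne_zero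
  rw [mul_add, mul_left_comm, mul_left_comm _ (q ^ (-(n : ℤ))), sub_inv_mul_qnum,
    sub_inv_mul_qnum, sub_inv_mul_qnum, zpow_neg, zpow_natCast]
  ring

end QuantumIntegers

section ActionAndBarInvolution

-- `RatFunc` brings its own `ℤ`- and `ℕ`-algebra structures, which agree with the canonical ones
-- only propositionally; `module` needs the canonical ones.
attribute [local instance] Ring.toIntAlgebra Semiring.toNatAlgebra

variable (a : ℕ → ℕ) {m n : ℕ}

theorem Fop_apply (f : V n) (γ : Fin n → Fin 2) :
    Fop a n f γ = ∑ i : Fin n, if γ i = 1 then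
      (-1) ^ onesBefore γ i * q ^ (∑ j ∈ Finset.range i, a j) * f (Function.update γ i 0)
    else 0 := by
  simp only [← sum_filter_lt_eq_sum_range]
  rfl

theorem Eop_apply (f : V n) (γ : Fin n → Fin 2) :
    Eop a n f γ = ∑ i : Fin n, if γ i = 0 then
      (-1) ^ onesBefore γ i * qnum (a i) * q ^ (-((∑ j ∈ Finset.Ico (i + 1 : ℕ) n, a j : ℕ) : ℤ))
        * f (Function.update γ i 1)
    else 0 := by
  simp only [← sum_filter_gt_eq_sum_Ico]
  rfl

theorem onesBefore_snoc_castSucc (δ : Fin m → Fin 2) (b : Fin 2) (i : Fin m) :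
    onesBefore (Fin.snoc δ b : Fin (m + 1) → Fin 2) i.castSucc = onesBefore δ i := by
  rw [onesBefore, onesBefore, Finset.card_filter, Finset.card_filter, Fin.sum_univ_castSucc]
  simp [(Fin.le_last _).not_gt]

theorem onesBefore_snoc_last (δ : Fin m → Fin 2) (b : Fin 2) :
    onesBefore (Fin.snoc δ b : Fin (m + 1) → Fin 2) (Fin.last m) = ones δ := by
  rw [onesBefore, ones, Finset.card_filter, Finset.card_filter, Fin.sum_univ_castSucc]
  simp [Fin.castSucc_lt_last]

theorem ones_snoc (δ : Fin m → Fin 2) (b : Fin 2) :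
    ones (Fin.snoc δ b : Fin (m + 1) → Fin 2) = ones δ + if b = 1 then 1 else 0 := by
  rw [ones, ones, Finset.card_filter, Finset.card_filter, Fin.sum_univ_castSucc]
  simp

/-- The coefficient of `v_b` in the last tensor factor: a vector `f` of `V(a_1) ⊗ ⋯ ⊗ V(a_{m+1})`
is `lastComponent 0 f ⊗ v_0 + lastComponent 1 f ⊗ v_1`. -/
def lastComponent (b : Fin 2) : V (m + 1) →ₗ[K] V m :=
  LinearMap.funLeft K K fun δ => Fin.snoc δ b

theorem lastComponent_apply (b : Fin 2) (f : V (m + 1)) (δ : Fin m → Fin 2) :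
    lastComponent b f δ = f (Fin.snoc δ b) := rfl

theorem ext_lastComponent {f g : V (m + 1)} (h0 : lastComponent 0 f = lastComponent 0 g)
    (h1 : lastComponent 1 f = lastComponent 1 g) : f = g := by
  funext γ
  obtain ⟨δ, b, rfl⟩ : ∃ δ b, γ = Fin.snoc δ b := ⟨_, _, (Fin.snoc_init_self γ).symm⟩
  fin_cases b
  · exact congrFun h0 δ
  · exact congrFun h1 δ

/-- The parity operator `twist` as a linear map. -/
def parityMap : Module.End K (V m) where
  toFun := twist
  map_add' _ _ := funext fun _ => mul_add _ _ _
  map_smul' _ _ := funext fun _ => mul_left_comm _ _ _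

theorem parityMap_apply (f : V m) (γ : Fin m → Fin 2) :
    parityMap f γ = (-1) ^ ones γ * f γ := rfl

theorem parityMap_parityMap (f : V m) : parityMap (parityMap f) = f := by
  funext γ
  rw [parityMap_apply, parityMap_apply, ← mul_assoc, ← mul_pow, neg_one_mul, neg_neg, one_pow,
    one_mul]

theorem lastComponent_zero_parityMap (f : V (m + 1)) :
    lastComponent 0 (parityMap f) = parityMap (lastComponent 0 f) := by
  funext δ
  simp [lastComponent_apply, parityMap_apply, ones_snoc]

theorem lastComponent_one_parityMap (f : V (m + 1)) :
    lastComponent 1 (parityMap f) = -parityMap (lastComponent 1 f) := by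
  funext δ
  simp [lastComponent_apply, parityMap_apply, ones_snoc, pow_succ]

theorem lastComponent_zero_Fop (f : V (m + 1)) :
    lastComponent 0 (Fop a (m + 1) f) = Fop a m (lastComponent 0 f) := by
  funext δ
  simp [lastComponent_apply, Fop_apply, Fin.sum_univ_castSucc, onesBefore_snoc_castSucc,
    Fin.snoc_update]

theorem lastComponent_one_Fop (f : V (m + 1)) :
    lastComponent 1 (Fop a (m + 1) f) =
      Fop a m (lastComponent 1 f) +
        q ^ (∑ j ∈ Finset.range m, a j) • parityMap (lastComponent 0 f) := by
  funext δ
  simp [lastComponent_apply, Fop_apply, parityMap_apply, Fin.sum_univ_castSucc,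
    onesBefore_snoc_castSucc, onesBefore_snoc_last, Fin.snoc_update, Fin.update_snoc_last,
    mul_assoc, mul_left_comm]

theorem q_zpow_neg_sum_Ico_succ (i : Fin m) :
    q ^ (-((∑ j ∈ Finset.Ico (i + 1 : ℕ) (m + 1), a j : ℕ) : ℤ)) =
      q ^ (-(a m : ℤ)) * q ^ (-((∑ j ∈ Finset.Ico (i + 1 : ℕ) m, a j : ℕ) : ℤ)) := by
  rw [← zpow_add₀ q_ne_zero, Finset.sum_Ico_succ_top i.isLt, Nat.cast_add, neg_add, add_comm]

theorem lastComponent_zero_Eop (f : V (m + 1)) :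
    lastComponent 0 (Eop a (m + 1) f) =
      q ^ (-(a m : ℤ)) • Eop a m (lastComponent 0 f) +
        qnum (a m) • parityMap (lastComponent 1 f) := by
  funext δ
  simp only [lastComponent_apply, Pi.add_apply, Pi.smul_apply, smul_eq_mul, Eop_apply,
    parityMap_apply, Fin.sum_univ_castSucc, Finset.mul_sum, mul_ite, mul_zero, Fin.snoc_castSucc,
    Fin.snoc_last, Fin.snoc_update, Fin.update_snoc_last, Fin.val_castSucc, Fin.val_last,
    onesBefore_snoc_castSucc, onesBefore_snoc_last, q_zpow_neg_sum_Ico_succ, if_true,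
    Finset.Ico_self, Finset.sum_empty, Nat.cast_zero, neg_zero, zpow_zero]
  simp only [one_mul, mul_assoc, mul_comm, mul_left_comm]

theorem lastComponent_one_Eop (f : V (m + 1)) :
    lastComponent 1 (Eop a (m + 1) f) = q ^ (-(a m : ℤ)) • Eop a m (lastComponent 1 f) := by
  funext δ
  simp only [lastComponent_apply, Pi.smul_apply, smul_eq_mul, Eop_apply,
    Fin.sum_univ_castSucc, Finset.mul_sum, mul_ite, mul_zero, Fin.snoc_castSucc,
    Fin.snoc_last, Fin.snoc_update, Fin.val_castSucc, onesBefore_snoc_castSucc,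
    q_zpow_neg_sum_Ico_succ, one_ne_zero, if_false, add_zero]
  simp only [mul_assoc, mul_comm, mul_left_comm]

theorem parityMap_Fop (f : V m) : parityMap (Fop a m f) = -Fop a m (parityMap f) := by
  induction m with
  | zero => funext γ; simp [parityMap_apply, Fop_apply]
  | succ m ih =>
    apply ext_lastComponent
    · simp only [lastComponent_zero_parityMap, lastComponent_zero_Fop, map_neg, ih]
    · simp only [lastComponent_one_parityMap, lastComponent_zero_parityMap, lastComponent_one_Fop,
        map_neg, map_add, map_smul, ih]

theorem parityMap_Eop (f : V m) : parityMap (Eop a m f) = -Eop a m (parityMap f) := by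
  induction m with
  | zero => funext γ; simp [parityMap_apply, Eop_apply]
  | succ m ih =>
    apply ext_lastComponent
    · simp only [lastComponent_one_parityMap, lastComponent_zero_parityMap,
        lastComponent_zero_Eop, map_neg, map_add, map_smul, ih]
      module
    · simp only [lastComponent_one_parityMap, lastComponent_one_Eop, map_neg, map_smul, ih,
        smul_neg]

theorem Eop_Fop_add_Fop_Eop (f : V m) :
    Eop a m (Fop a m f) + Fop a m (Eop a m f) = qnum (∑ j ∈ Finset.range m, a j) • f := by
  induction m with
  | zero => funext γ; simp [Fop_apply, Eop_apply, qnum]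
  | succ m ih =>
    rw [Finset.sum_range_succ, qnum_add]
    apply ext_lastComponent
    · simp only [map_add, map_smul, lastComponent_zero_Fop, lastComponent_one_Fop,
        lastComponent_zero_Eop, parityMap_parityMap, parityMap_Fop]
      linear_combination (norm := module) q ^ (-(a m : ℤ)) • ih (lastComponent 0 f)
    · simp only [map_add, map_smul, lastComponent_one_Fop, lastComponent_zero_Eop,
        lastComponent_one_Eop, parityMap_parityMap, parityMap_Eop]
      linear_combination (norm := module) q ^ (-(a m : ℤ)) • ih (lastComponent 1 f)

variable (barK : K →+* K)

theorem lastComponent_zero_barSemi (f : V (m + 1)) :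
    lastComponent 0 (barSemi barK a (m + 1) f) = barSemi barK a m (lastComponent 0 f) := by
  funext δ
  simp [lastComponent_apply, barSemi, barV]

theorem lastComponent_one_barSemi (f : V (m + 1)) :
    lastComponent 1 (barSemi barK a (m + 1) f) =
      barSemi barK a m (lastComponent 1 f) +
        (q⁻¹ - q) • Eop a m (parityMap (barSemi barK a m (lastComponent 0 f))) := by
  funext δ
  simp [lastComponent_apply, barSemi, barV, parityMap]

theorem barSemi_zero_apply (f : V 0) (γ : Fin 0 → Fin 2) : barSemi barK a 0 f γ = barK (f γ) := rfl

theorem barSemi_add (f g : V m) :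
    barSemi barK a m (f + g) = barSemi barK a m f + barSemi barK a m g := by
  induction m with
  | zero => funext γ; simp [barSemi_zero_apply]
  | succ m ih =>
    apply ext_lastComponent
    · simp only [lastComponent_zero_barSemi, map_add, ih]
    · simp only [lastComponent_one_barSemi, map_add, ih]
      module

theorem barSemi_smul (c : K) (f : V m) :
    barSemi barK a m (c • f) = barK c • barSemi barK a m f := by
  induction m with
  | zero => funext γ; simp [barSemi_zero_apply]
  | succ m ih =>
    apply ext_lastComponent
    · simp only [lastComponent_zero_barSemi, map_smul, ih]
    · simp only [lastComponent_one_barSemi, map_smul, ih]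
      module

theorem barSemi_neg (f : V m) : barSemi barK a m (-f) = -barSemi barK a m f := by
  simpa using barSemi_smul a barK (-1) f

theorem barSemi_sub (f g : V m) :
    barSemi barK a m (f - g) = barSemi barK a m f - barSemi barK a m g := by
  rw [sub_eq_add_neg, barSemi_add, barSemi_neg, sub_eq_add_neg]

theorem barSemi_parityMap (f : V m) :
    barSemi barK a m (parityMap f) = parityMap (barSemi barK a m f) := by
  induction m with
  | zero => funext γ; simp [barSemi_zero_apply, parityMap_apply]
  | succ m ih =>
    apply ext_lastComponent
    · simp only [lastComponent_zero_barSemi, lastComponent_zero_parityMap, ih]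
    · simp only [lastComponent_one_barSemi, lastComponent_zero_parityMap,
        lastComponent_one_parityMap, barSemi_neg, map_add, map_smul, ih, parityMap_Eop]
      module

theorem barSemi_Fop {barK : K →+* K} (hq : barK q = q⁻¹) (f : V m) :
    barSemi barK a m (Fop a m f) = Fop a m (barSemi barK a m f) := by
  induction m with
  | zero => funext γ; simp [barSemi_zero_apply, Fop_apply]
  | succ m ih =>
    apply ext_lastComponent
    · simp only [lastComponent_zero_barSemi, lastComponent_zero_Fop, ih]
    · have hEF := congrArg ((q - q⁻¹) • ·)
        (Eop_Fop_add_Fop_Eop a (parityMap (barSemi barK a m (lastComponent 0 f))))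
      simp only [smul_smul, sub_inv_mul_qnum] at hEF
      simp only [lastComponent_one_barSemi, lastComponent_zero_barSemi, lastComponent_zero_Fop,
        lastComponent_one_Fop, barSemi_add, barSemi_smul, map_add, map_smul, map_neg,
        map_pow, hq, ih, barSemi_parityMap, parityMap_Fop]
      linear_combination (norm := module) hEF

end ActionAndBarInvolution

section Lattice

open Polynomial in
theorem natDegree_eq_zero_of_aeval_inv_eq {R F : Type*} [CommRing R] [Field F] [Algebra R F]
    {x : F} (hx : Transcendental R x) {P : R[X]} (h : aeval x⁻¹ P = aeval x P) :
    P.natDegree = 0 := by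
  obtain rfl | hP := eq_or_ne P 0
  · exact natDegree_zero
  have : Nontrivial R := Polynomial.nontrivial_iff.mp ⟨P, 0, hP⟩
  have hx0 : x ≠ 0 := by rintro rfl; exact hx isAlgebraic_zero
  let _ : Invertible x⁻¹ := invertibleOfNonzero (inv_ne_zero hx0)
  have hrev : aeval x P.reverse * x⁻¹ ^ P.natDegree = aeval x⁻¹ P := by
    simpa [aeval_def] using eval₂_reverse_mul_pow (algebraMap R F) x⁻¹ P
  have hreverse : P.reverse = P * X ^ P.natDegree := by
    apply transcendental_iff_injective.mp hx
    rw [map_mul, map_pow, aeval_X, ← h, ← hrev, mul_assoc, ← mul_pow, inv_mul_cancel₀ hx0,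
      one_pow, mul_one]
  have hdeg := P.reverse_natDegree_le
  rw [hreverse, natDegree_mul_X_pow _ hP] at hdeg
  omega

/-- The ideal `q ℤ[q]` of `ℤ[q]`, as a `ℤ[q]`-submodule of `K`. -/
def qIdeal : Submodule (Algebra.adjoin ℤ {q}) K := Submodule.span _ {q}

theorem mem_qIdeal {x : K} : x ∈ qIdeal ↔ ∃ P : Polynomial ℤ, q * Polynomial.aeval q P = x := by
  simp [qIdeal, Submodule.mem_span_singleton, Subalgebra.smul_def,
    Algebra.adjoin_singleton_eq_range_aeval, mul_comm q]

theorem eq_zero_of_mem_qIdeal_of_map_eq_self {barK : K →+* K} (hq : barK q = q⁻¹) {x : K}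
    (hx : x ∈ qIdeal) (hbar : barK x = x) : x = 0 := by
  obtain ⟨P, rfl⟩ := mem_qIdeal.mp hx
  have haeval : q * Polynomial.aeval q P = Polynomial.aeval q (Polynomial.X * P) := by simp
  have hinv : Polynomial.aeval q⁻¹ (Polynomial.X * P) =
      Polynomial.aeval q (Polynomial.X * P) := by
    rw [← haeval, ← hbar, haeval, ← hq, Polynomial.aeval_def, Polynomial.aeval_def,
      Polynomial.hom_eval₂, Subsingleton.elim (barK.comp (algebraMap ℤ K)) (algebraMap ℤ K)]
  have hdeg := natDegree_eq_zero_of_aeval_inv_eq transcendental_q hinv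
  have hP : P = 0 := by
    by_contra hP
    rw [Polynomial.natDegree_X_mul hP] at hdeg
    exact Nat.succ_ne_zero _ hdeg
  simp [hP]

/-- The lattice of vectors all of whose standard coordinates lie in `q ℤ[q]`. -/
def qLattice (n : ℕ) : Submodule (Algebra.adjoin ℤ {q}) (V n) :=
  Submodule.pi Set.univ fun _ => qIdeal

theorem mem_qLattice {n : ℕ} {f : V n} : f ∈ qLattice n ↔ ∀ γ, f γ ∈ qIdeal := by
  simp [qLattice]

theorem smul_eb_mem_qLattice {n : ℕ} {c : K} (hc : c ∈ qIdeal) (η : Fin n → Fin 2) :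
    c • eb η ∈ qLattice n := by
  refine mem_qLattice.mpr fun γ => ?_
  simp only [Pi.smul_apply, smul_eq_mul, eb, mul_ite, mul_one, mul_zero]
  split_ifs
  · exact hc
  · exact zero_mem _

theorem eq_zero_of_mem_qLattice_of_barSemi_eq_self {barK : K →+* K} (hq : barK q = q⁻¹)
    (a : ℕ → ℕ) {m : ℕ} {f : V m} (hf : f ∈ qLattice m) (hbar : barSemi barK a m f = f) :
    f = 0 := by
  induction m with
  | zero =>
    funext γ
    exact eq_zero_of_mem_qIdeal_of_map_eq_self hq (mem_qLattice.mp hf γ) (congrFun hbar γ)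
  | succ m ih =>
    have hcomponent (b : Fin 2) : lastComponent b f ∈ qLattice m :=
      mem_qLattice.mpr fun _ => mem_qLattice.mp hf _
    have h0 : lastComponent 0 f = 0 :=
      ih (hcomponent 0) (by rw [← lastComponent_zero_barSemi, hbar])
    have h1 : lastComponent 1 f = 0 := by
      have hone := lastComponent_one_barSemi a barK f
      rw [← lastComponent_zero_barSemi, hbar, h0, map_zero, map_zero, smul_zero, add_zero] at hone
      exact ih (hcomponent 1) hone.symm
    exact ext_lastComponent (by rw [h0, map_zero]) (by rw [h1, map_zero])

theorem sign_mul_q_pow_mem_adjoin (k n : ℕ) : (-1) ^ k * q ^ n ∈ Algebra.adjoin ℤ {q} :=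
  mul_mem (pow_mem (neg_mem (one_mem _)) k)
    (pow_mem (Algebra.self_mem_adjoin_singleton ℤ q) n)

theorem Fop_mem_qLattice (a : ℕ → ℕ) {n : ℕ} {f : V n} (hf : f ∈ qLattice n) :
    Fop a n f ∈ qLattice n := by
  refine mem_qLattice.mpr fun γ => ?_
  rw [Fop_apply]
  refine sum_mem fun i _ => ?_
  split_ifs
  · exact qIdeal.smul_mem ⟨_, sign_mul_q_pow_mem_adjoin _ _⟩ (mem_qLattice.mp hf _)
  · exact zero_mem _

theorem onesBefore_update {n : ℕ} (η : Fin n → Fin 2) (i : Fin n) (b : Fin 2) :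
    onesBefore (Function.update η i b) i = onesBefore η i := by
  unfold onesBefore
  congr 1
  refine Finset.filter_congr fun k _ => and_congr_right fun hk => ?_
  rw [Function.update_of_ne hk.ne]

theorem Fop_eb (a : ℕ → ℕ) {n : ℕ} (η : Fin n → Fin 2) :
    Fop a n (eb η) = ∑ i : Fin n, if η i = 0 then
      ((-1) ^ onesBefore η i * q ^ (∑ j ∈ Finset.range i, a j)) • eb (Function.update η i 1)
    else 0 := by
  funext γ
  rw [Fop_apply, Finset.sum_apply]
  refine Finset.sum_congr rfl fun i _ => ?_
  have hupdate : (γ i = 1 ∧ Function.update γ i 0 = η) ↔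
      (η i = 0 ∧ γ = Function.update η i 1) := by
    constructor
    · rintro ⟨hγ, rfl⟩
      simp [← hγ]
    · rintro ⟨hη, rfl⟩
      simp [← hη]
  simp only [eb, ite_apply, Pi.smul_apply, Pi.zero_apply, smul_eq_mul, mul_ite, mul_one, mul_zero,
    ← ite_and, hupdate]
  split_ifs with h
  · rw [h.2, onesBefore_update]
  · rfl

theorem Fop_eb_sub_mem_qLattice {a : ℕ → ℕ} (ha : 0 < a 0) {m : ℕ} (η : Fin (m + 1) → Fin 2) :
    Fop a (m + 1) (eb η) - (if η 0 = 0 then eb (Function.update η 0 1) else 0) ∈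
      qLattice (m + 1) := by
  have hfirst : onesBefore η 0 = 0 := by simp [onesBefore]
  rw [Fop_eb, Fin.sum_univ_succ, hfirst]
  simp only [Fin.val_zero, Finset.range_zero, Finset.sum_empty, pow_zero, one_mul, one_smul,
    add_sub_cancel_left, Fin.val_succ]
  refine sum_mem fun i _ => ?_
  split_ifs
  · apply smul_eb_mem_qLattice
    rw [Finset.sum_range_succ', ← Nat.sub_add_cancel ha, ← add_assoc, pow_succ, ← mul_assoc]
    exact qIdeal.smul_mem ⟨_, sign_mul_q_pow_mem_adjoin _ _⟩ (Submodule.mem_span_singleton_self q)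
  · exact zero_mem _

end Lattice

section CanonicalLift

/-- A bar-invariant vector congruent to `v_η` modulo the `q ℤ[q]`-span of the standard basis: the
definition of a canonical basis element without its triangularity condition. -/
structure IsCanonicalLift (barK : K →+* K) (a : ℕ → ℕ) {l : ℕ} (η : Fin l → Fin 2) (v : V l) :
    Prop where
  barSemi_eq : barSemi barK a l v = v
  sub_eb_mem : v - eb η ∈ qLattice l

variable {barK : K →+* K} {a : ℕ → ℕ}

theorem IsCanon.isCanonicalLift {l : ℕ} {η : Fin l → Fin 2} {v : V l}
    (hv : IsCanon barK a l η v) : IsCanonicalLift barK a η v where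
  barSemi_eq := hv.1
  sub_eb_mem := by
    obtain ⟨_, R, _, rfl⟩ := hv
    rw [add_sub_cancel_left]
    exact sum_mem fun γ _ => smul_eb_mem_qLattice (mem_qIdeal.mpr ⟨R γ, rfl⟩) γ

theorem IsCanonicalLift.unique (hq : barK q = q⁻¹) {l : ℕ} {η : Fin l → Fin 2} {v w : V l}
    (hv : IsCanonicalLift barK a η v) (hw : IsCanonicalLift barK a η w) : v = w := by
  refine sub_eq_zero.mp (eq_zero_of_mem_qLattice_of_barSemi_eq_self hq a ?_ ?_)
  · simpa using sub_mem hv.sub_eb_mem hw.sub_eb_mem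
  · rw [barSemi_sub, hv.barSemi_eq, hw.barSemi_eq]

theorem IsCanonicalLift.Fop_sub_mem_qLattice (ha : 0 < a 0) {m : ℕ} {η : Fin (m + 1) → Fin 2}
    {v : V (m + 1)} (hv : IsCanonicalLift barK a η v) :
    Fop a (m + 1) v - (if η 0 = 0 then eb (Function.update η 0 1) else 0) ∈ qLattice (m + 1) := by
  have h := add_mem (Fop_mem_qLattice a hv.sub_eb_mem) (Fop_eb_sub_mem_qLattice ha η)
  rwa [map_sub, sub_add_sub_cancel] at h

theorem statement16_general (ha : 0 < a 0) (hq : barK q = q⁻¹) {m : ℕ} {η : Fin (m + 1) → Fin 2}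
    {v : V (m + 1)} (hv : IsCanonicalLift barK a η v) :
    (η 0 = 0 → IsCanonicalLift barK a (Function.update η 0 1) (Fop a (m + 1) v)) ∧
      (η 0 = 1 → Fop a (m + 1) v = 0) := by
  have hbar : barSemi barK a (m + 1) (Fop a (m + 1) v) = Fop a (m + 1) v := by
    rw [barSemi_Fop a hq, hv.barSemi_eq]
  have hmod := hv.Fop_sub_mem_qLattice ha
  constructor
  · intro h0
    exact ⟨hbar, by rwa [if_pos h0] at hmod⟩
  · intro h1
    rw [if_neg (by simp [h1]), sub_zero] at hmod
    exact eq_zero_of_mem_qLattice_of_barSemi_eq_self hq a hmod hbar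

end CanonicalLift

/-!
STATEMENT 16: Let `a = (a_1,…,a_l)` be a sequence of positive integers and `v^{◊a}_η` a
canonical basis element of `V(a)`.  If `η_1 = 0` then `F(v^{◊a}_η) = v^{◊a}_{η'}` where
`η' = (1, η_2, …, η_l)`; if `η_1 = 1` then `F(v^{◊a}_η) = 0`.
-/

theorem statement16 (l : ℕ) (hl : 0 < l) (a : ℕ → ℕ) (ha : ∀ i, 0 < a i)
    (barK : K →+* K) (hbarKq : barK q = q⁻¹)
    (hbarKc : ∀ z : ℂ, barK (algebraMap ℂ K z) = algebraMap ℂ K z)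
    (η : Fin l → Fin 2) (v : V l) (hv : IsCanon barK a l η v) :
    (η ⟨0, hl⟩ = 0 →
      ∀ w : V l, IsCanon barK a l (Function.update η ⟨0, hl⟩ 1) w → Fop a l v = w) ∧
    (η ⟨0, hl⟩ = 1 → Fop a l v = 0) := by
  obtain ⟨m, rfl⟩ := Nat.exists_eq_add_one.mpr hl
  have hF := statement16_general (ha 0) hbarKq hv.isCanonicalLift
  exact ⟨fun h0 w hw => (hF.1 h0).unique hbarKq hw.isCanonicalLift, hF.2⟩
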